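/- arXiv:0805.4533 — 3 statements merged into one kernel-verified Lean document; each statement's English description precedes it below -/
import Mathlib

section
/- Let P ⊆ ℝ^d be a d-dimensional simplicial reflexive polytope. Then the number of vertices of P is at most 3d if d is even, and at most 3d−1 if d is odd. -/
noncomputable section

/-- The standard inner product on `ℝ^d`. -/
def dotp {d : ℕ} (x y : Fin d → ℝ) : ℝ := ∑ i, x i * y i

/-- `x` is a point of the lattice `ℤ^d`. -/
def IsLP {d : ℕ} (x : Fin d → ℝ) : Prop := ∀ i, ∃ n : ℤ, x i = (n : ℝ)

/-- A lattice polytope: convex hull of finitely many lattice points. -/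
def IsLatticePolytope {d : ℕ} (P : Set (Fin d → ℝ)) : Prop :=
  ∃ V : Finset (Fin d → ℝ), (∀ v ∈ V, IsLP v) ∧ P = convexHull ℝ (V : Set (Fin d → ℝ))

/-- The dual polytope `P* = {x | ⟨x,y⟩ ≤ 1 ∀ y ∈ P}`. -/
def dualPolytope {d : ℕ} (P : Set (Fin d → ℝ)) : Set (Fin d → ℝ) :=
  {x | ∀ y ∈ P, dotp x y ≤ 1}

/-- `P` is a reflexive polytope: a (`d`-dimensional) lattice polytope with `0` in its
interior whose dual is again a lattice polytope. -/
def IsReflexive {d : ℕ} (P : Set (Fin d → ℝ)) : Prop :=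
  IsLatticePolytope P ∧ (0 : Fin d → ℝ) ∈ interior P ∧ IsLatticePolytope (dualPolytope P)

/-- `F` is a facet of `P` with (uniquely determined) outer normal `u`, normalized by
`⟨u, F⟩ = 1` (possible since `0` is in the interior of `P`). -/
def IsFacetNormal {d : ℕ} (P F : Set (Fin d → ℝ)) (u : Fin d → ℝ) : Prop :=
  F.Nonempty ∧ (∀ y ∈ P, dotp u y ≤ 1) ∧ F = {y ∈ P | dotp u y = 1} ∧
    Module.finrank ℝ (vectorSpan ℝ F) = d - 1

/-- `F` is a facet of `P`. -/
def IsFacet {d : ℕ} (P F : Set (Fin d → ℝ)) : Prop := ∃ u, IsFacetNormal P F u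

/-- `P` is simplicial: every facet has exactly `d` vertices. -/
def IsSimplicial {d : ℕ} (P : Set (Fin d → ℝ)) : Prop :=
  ∀ F, IsFacet P F → (Set.extremePoints ℝ F).ncard = d

/-! The sum `s` of the vertices of `P` is paired with the vertices `u` of the dual polytope. Each
pairing `⟨u, v⟩` is an integer at most `1`. The value `1` occurs exactly `d` times, by
simpliciality. The value `0` occurs at most `d` times: such a `v` has a negative coordinate, say
at `e`, in the basis formed by the facet of `u`, and then `v` is the one vertex that replaces `e`
in the adjacent facet. All other values are at most `-1`, so `⟨u, s⟩ ≤ 3d - |V|`; this extends to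
the whole dual polytope, and evaluating at its point `0` gives `|V| ≤ 3d`.

If `|V| = 3d`, then `⟨·, s⟩` is nonpositive on a neighbourhood of `0`, hence vanishes, and all the
estimates are equalities. Thus `⟨u, v⟩ ≥ -1` throughout, `P = -P`, and the vertices come in pairs
`±v`; so `3d` is even.
-/

open Filter Module Topology

section LinearAlgebra

lemma even_card_of_neg_mem {G : Type*} [AddGroup G] [IsAddTorsionFree G] {V : Finset G}
    (hV : ∀ v ∈ V, -v ∈ V) (h0 : (0 : G) ∉ V) : Even V.card := by
  have hsum : ∑ _v ∈ V, (1 : ZMod 2) = 0 :=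
    Finset.sum_involution (fun v _ => -v) (fun _ _ => by decide)
      (fun v hv _ hfix => h0 (self_eq_neg.1 hfix.symm ▸ hv)) hV fun v _ => neg_neg v
  rwa [Finset.sum_const, nsmul_one, ZMod.natCast_eq_zero_iff_even] at hsum

lemma finrank_vectorSpan_of_span_eq_top {K E : Type*} [Field K] [AddCommGroup E]
    [Module K E] [FiniteDimensional K E] {F : Set E} {f : Dual K E} (hne : F.Nonempty)
    (hf : ∀ x ∈ F, f x = 1) (hF : Submodule.span K F = ⊤) :
    finrank K (vectorSpan K F) = finrank K E - 1 := by
  obtain ⟨x, hx⟩ := hne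
  have hker : vectorSpan K F ≤ LinearMap.ker f := by
    rw [vectorSpan_def, Submodule.span_le]
    rintro _ ⟨a, ha, b, hb, rfl⟩
    simp [hf a ha, hf b hb]
  have hx0 : x ≠ 0 := by
    rintro rfl
    simpa using hf 0 hx
  have hdisjoint : Disjoint (Submodule.span K {x}) (vectorSpan K F) := by
    refine ((Submodule.disjoint_span_singleton' hx0).2 fun hmem => ?_).symm
    have hfx : f x = 0 := hker hmem
    exact one_ne_zero ((hf x hx).symm.trans hfx)
  have hcodisjoint : Codisjoint (Submodule.span K {x}) (vectorSpan K F) := by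
    rw [codisjoint_iff_le_sup, ← hF, Submodule.span_le]
    intro y hy
    rw [← add_sub_cancel x y]
    exact Submodule.add_mem_sup (Submodule.mem_span_singleton_self x)
      (vsub_mem_vectorSpan K hy hx)
  have hadd := Submodule.finrank_add_eq_of_isCompl ⟨hdisjoint, hcodisjoint⟩
  rw [finrank_span_singleton hx0] at hadd
  omega

lemma dual_eq_add_smul_coord {R M ι : Type*} [CommRing R] [AddCommGroup M] [Module R M]
    (b : Basis ι R M) {f g : Dual R M} {j : ι} (hfg : ∀ i ≠ j, f (b i) = g (b i)) :
    f = g + (f (b j) - g (b j)) • b.coord j := by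
  classical
  refine b.ext fun i => ?_
  by_cases hij : i = j
  · subst hij
    simp
  · simp [hfg i hij, hij]

variable {𝕜 E : Type*} [Field 𝕜] [LinearOrder 𝕜] [IsStrictOrderedRing 𝕜] [AddCommGroup E]
  [Module 𝕜 E]

lemma apply_le_of_mem_convexHull {S : Set E} {f : Dual 𝕜 E} {c : 𝕜} (hf : ∀ x ∈ S, f x ≤ c)
    {x : E} (hx : x ∈ convexHull 𝕜 S) : f x ≤ c :=
  convexHull_min hf (convex_halfSpace_le f.isLinear c) hx

lemma isExtreme_setOf_apply_eq {P : Set E} {f : Dual 𝕜 E} {c : 𝕜} (hf : ∀ x ∈ P, f x ≤ c) :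
    IsExtreme 𝕜 P {x ∈ P | f x = c} := by
  refine ⟨fun x hx => hx.1, ?_⟩
  rintro x hx y hy z ⟨-, hz⟩ ⟨a, b, ha, hb, hab, rfl⟩
  refine ⟨hx, (hf x hx).eq_of_not_lt fun hlt => hz.not_lt ?_⟩
  calc f (a • x + b • y) = a * f x + b * f y := by simp
    _ < a * c + b * c :=
      add_lt_add_of_lt_of_le (mul_lt_mul_of_pos_left hlt ha)
        (mul_le_mul_of_nonneg_left (hf y hy) hb.le)
    _ = c := by rw [← add_mul, hab, one_mul]

lemma mem_convexHull_setOf_apply_eq {S : Set E} {f : Dual 𝕜 E} {c : 𝕜} (hf : ∀ x ∈ S, f x ≤ c)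
    {x : E} (hx : x ∈ convexHull 𝕜 S) (hfx : f x = c) :
    x ∈ convexHull 𝕜 {y ∈ S | f y = c} := by
  obtain ⟨ι, _, w, z, hw₀, hw₁, hz, rfl⟩ := mem_convexHull_iff_exists_fintype.1 hx
  have hsum : ∑ i, w i * (c - f (z i)) = 0 := by
    simpa [mul_sub, ← Finset.sum_mul, hw₁, sub_eq_zero] using hfx.symm
  rw [Fintype.sum_eq_zero_iff_of_nonneg
    fun i => mul_nonneg (hw₀ i) (sub_nonneg.2 (hf _ (hz i)))] at hsum
  rw [← finsum_eq_sum_of_fintype]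
  refine (convex_convexHull 𝕜 _).finsum_mem hw₀ (by rwa [finsum_eq_sum_of_fintype]) fun i hi => ?_
  have hfi : c - f (z i) = 0 := (mul_eq_zero.1 (congrFun hsum i)).resolve_left hi
  exact subset_convexHull 𝕜 _ ⟨hz i, by linarith⟩

lemma neg_mem_extremePoints {P : Set E} (hP : ∀ x ∈ P, -x ∈ P) {x : E}
    (hx : x ∈ Set.extremePoints 𝕜 P) : -x ∈ Set.extremePoints 𝕜 P := by
  have himage : LinearEquiv.neg 𝕜 '' P = P :=
    Set.Subset.antisymm (Set.image_subset_iff.2 hP) fun y hy => ⟨-y, hP y hy, neg_neg y⟩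
  rw [← himage, ← image_extremePoints]
  exact ⟨x, hx, rfl⟩

end LinearAlgebra

section PolarDual

variable {E : Type*} [AddCommGroup E] [Module ℝ E]

/-- The one-sided polar of `S`, realised in the dual space: for a polytope `S` with `0` in its
interior this is the dual polytope. -/
def polarDual (S : Set E) : Set (Dual ℝ E) := {f | ∀ x ∈ S, f x ≤ 1}

/-- The vertices `v ∈ V` on the facet with normalized outer normal `u`. -/
def facetVertices (V : Finset E) (u : Dual ℝ E) : Finset E := {v ∈ V | u v = 1}

variable {V : Finset E} {u : Dual ℝ E}

lemma mem_facetVertices {v : E} : v ∈ facetVertices V u ↔ v ∈ V ∧ u v = 1 := Finset.mem_filter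

lemma polarDual_convexHull (S : Set E) : polarDual (convexHull ℝ S) = polarDual S :=
  Set.Subset.antisymm (fun _ hf x hx => hf x (subset_convexHull ℝ S hx))
    fun _ hf _ hx => apply_le_of_mem_convexHull hf hx

lemma mem_of_forall_mem_polarDual_apply_le [TopologicalSpace E] [IsTopologicalAddGroup E]
    [ContinuousSMul ℝ E] [LocallyConvexSpace ℝ E] {P : Set E} (hconvex : Convex ℝ P)
    (hclosed : IsClosed P) (h0 : (0 : E) ∈ P) {x : E} (hx : ∀ f ∈ polarDual P, f x ≤ 1) :
    x ∈ P := by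
  by_contra hxP
  obtain ⟨f, c, hfP, hfx⟩ := geometric_hahn_banach_closed_point hconvex hclosed hxP
  have hc : 0 < c := by simpa using hfP 0 h0
  have hmem : c⁻¹ • (f : Dual ℝ E) ∈ polarDual P := fun y hy => by
    simpa [inv_mul_le_iff₀ hc] using (hfP y hy).le
  have hle : f x ≤ c := by simpa [inv_mul_le_iff₀ hc] using hx _ hmem
  exact hle.not_gt hfx

lemma eventually_add_smul_mem_polarDual {g : Dual ℝ E} (hu : u ∈ polarDual (V : Set E))
    (hg : ∀ v ∈ facetVertices V u, g v ≤ 0) :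
    ∀ᶠ t in 𝓝[>] (0 : ℝ), u + t • g ∈ polarDual (V : Set E) := by
  change ∀ᶠ t in 𝓝[>] (0 : ℝ), ∀ v ∈ V, u v + t * g v ≤ 1
  refine (eventually_all_finset V).2 fun v hv => ?_
  by_cases huv : u v = 1
  · filter_upwards [self_mem_nhdsWithin] with t ht
    have := mul_nonpos_of_nonneg_of_nonpos (le_of_lt ht) (hg v (mem_facetVertices.2 ⟨hv, huv⟩))
    linarith
  · have hcont : Tendsto (fun t : ℝ => u v + t * g v) (𝓝 0) (𝓝 (u v + 0 * g v)) :=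
      Continuous.tendsto (by fun_prop) 0
    have hlt : u v + 0 * g v < 1 := by simpa using (hu v hv).lt_of_ne huv
    exact nhdsWithin_le_nhds ((hcont.eventually_lt_const hlt).mono fun _ => le_of_lt)

lemma span_facetVertices_eq_top (hu : u ∈ Set.extremePoints ℝ (polarDual (V : Set E))) :
    Submodule.span ℝ (facetVertices V u : Set E) = ⊤ := by
  by_contra hne
  obtain ⟨g, hg0, hg⟩ := Submodule.exists_le_ker_of_lt_top _ (lt_top_iff_ne_top.2 hne)
  have hgv : ∀ v ∈ facetVertices V u, g v = 0 := fun v hv => hg (Submodule.subset_span hv)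
  obtain ⟨t, ⟨hadd, hsub⟩, ht⟩ :=
    (((eventually_add_smul_mem_polarDual hu.1 fun v hv => (hgv v hv).le).and
      (eventually_add_smul_mem_polarDual (g := -g) hu.1 fun v hv => by simp [hgv v hv])).and
        self_mem_nhdsWithin).exists
  have heq : u + t • g = u :=
    hu.2 hadd hsub ⟨1 / 2, 1 / 2, by norm_num, by norm_num, by norm_num, by module⟩
  exact hg0 ((smul_eq_zero.1 (add_eq_left.1 heq)).resolve_left (ne_of_gt ht))

lemma exists_ne_forall_apply_eq_one {U : Set (Dual ℝ E)}
    (hU : polarDual (V : Set E) = convexHull ℝ U) (hu : u ∈ U) {g : Dual ℝ E} (hg0 : g ≠ 0)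
    (hg : ∀ v ∈ facetVertices V u, 0 ≤ g v) :
    ∃ u' ∈ U, u' ≠ u ∧ ∀ v ∈ facetVertices V u, g v = 0 → u' v = 1 := by
  have hUV : U ⊆ polarDual (V : Set E) := hU ▸ subset_convexHull ℝ U
  obtain ⟨t, hmem, ht⟩ := ((eventually_add_smul_mem_polarDual (g := -g) (hUV hu)
    fun v hv => neg_nonpos.2 (hg v hv)).and self_mem_nhdsWithin).exists
  -- `L` is maximal on `U` exactly at the normals of the facets containing all of `T`.
  let T : Finset E := {v ∈ facetVertices V u | g v = 0}
  let L : Dual ℝ (Dual ℝ E) := ∑ v ∈ T, Dual.eval ℝ E v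
  have hL (f : Dual ℝ E) : L f = ∑ v ∈ T, f v := by simp [L]
  have hTV {v : E} (hv : v ∈ T) : (v ∈ V ∧ u v = 1) ∧ g v = 0 := by
    simpa [T, mem_facetVertices] using hv
  have hle (f) (hf : f ∈ U) : ∀ v ∈ T, f v ≤ 1 := fun v hv => hUV hf v (hTV hv).1.1
  have hface : u + t • -g ∈ convexHull ℝ {f ∈ U | L f = ∑ v ∈ T, 1} := by
    refine mem_convexHull_setOf_apply_eq (fun f hf => ?_) (hU ▸ hmem) ?_
    · exact hL f ▸ Finset.sum_le_sum (hle f hf)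
    · rw [hL]
      exact Finset.sum_congr rfl fun v hv => by simp [hTV hv]
  by_contra! hcon
  have hsub : {f ∈ U | L f = ∑ v ∈ T, 1} ⊆ {u} := by
    rintro f ⟨hf, hLf⟩
    by_contra hfu
    obtain ⟨v, hv, hgv, hfv⟩ := hcon f hf hfu
    rw [hL, Finset.sum_eq_sum_iff_of_le (hle f hf)] at hLf
    exact hfv (hLf v (Finset.mem_filter.2 ⟨hv, hgv⟩))
  have hu_eq : u + t • -g = u := by simpa using convexHull_mono hsub hface
  exact hg0 (by simpa [ne_of_gt ht] using hu_eq)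

end PolarDual

/-- `V` and `U` are the vertex sets of a simplicial reflexive polytope and of its dual. The lattice
is encoded by the integrality of the pairing, and simpliciality by the points of `V` on each facet
being `dim E` spanning vectors. The last field excludes `0`, the only point that `V` could contain
besides the vertices. -/
structure IsSimplicialReflexivePair {E : Type*} [AddCommGroup E] [Module ℝ E] (V : Finset E)
    (U : Finset (Dual ℝ E)) : Prop where
  polarDual_eq : polarDual (V : Set E) = convexHull ℝ (U : Set (Dual ℝ E))
  exists_int : ∀ u ∈ U, ∀ v ∈ V, ∃ n : ℤ, u v = n
  card_facetVertices : ∀ u ∈ U, (facetVertices V u).card = finrank ℝ E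
  span_facetVertices : ∀ u ∈ U, Submodule.span ℝ (facetVertices V u : Set E) = ⊤
  zero_notMem : (0 : E) ∉ V

namespace IsSimplicialReflexivePair

variable {E : Type*} [AddCommGroup E] [Module ℝ E] {V : Finset E} {U : Finset (Dual ℝ E)}
  {u : Dual ℝ E}

lemma apply_le_one (h : IsSimplicialReflexivePair V U) (hu : u ∈ U) : ∀ v ∈ V, u v ≤ 1 :=
  h.polarDual_eq.symm.subset (subset_convexHull ℝ _ hu)

/-- The vertices of the facet with normal `u`, as a basis of the ambient space. -/
def facetBasis (h : IsSimplicialReflexivePair V U) (hu : u ∈ U) :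
    Basis (facetVertices V u) ℝ E :=
  basisOfTopLeSpanOfCardEqFinrank Subtype.val (by simpa using (h.span_facetVertices u hu).ge)
    (by simpa using h.card_facetVertices u hu)

@[simp]
lemma facetBasis_apply (h : IsSimplicialReflexivePair V U) (hu : u ∈ U) (e : facetVertices V u) :
    h.facetBasis hu e = e := by
  simp [facetBasis]

lemma apply_eq_sum_coord (h : IsSimplicialReflexivePair V U) (hu : u ∈ U) (x : E) :
    u x = ∑ e, (h.facetBasis hu).coord e x := by
  conv_lhs => rw [← (h.facetBasis hu).sum_repr x]
  simp [(mem_facetVertices.1 (Subtype.prop _)).2]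

lemma exists_coord_neg (h : IsSimplicialReflexivePair V U) (hu : u ∈ U) {v : E} (hv : v ∈ V)
    (huv : u v = 0) : ∃ e, (h.facetBasis hu).coord e v < 0 := by
  by_contra! hnonneg
  rw [h.apply_eq_sum_coord hu, Fintype.sum_eq_zero_iff_of_nonneg hnonneg] at huv
  have hv0 : v = 0 := (h.facetBasis hu).forall_coord_eq_zero_iff.1 (congrFun huv)
  exact h.zero_notMem (hv0 ▸ hv)

lemma exists_adjacent (h : IsSimplicialReflexivePair V U) (hu : u ∈ U) (e : facetVertices V u) :
    ∃ u' ∈ U, u' ≠ u ∧ ∀ f ∈ facetVertices V u, f ≠ e → u' f = 1 := by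
  classical
  have hcoord (f : E) (hf : f ∈ facetVertices V u) :
      (h.facetBasis hu).coord e f = if f = e then 1 else 0 := by
    have hrepr := (h.facetBasis hu).repr_self_apply ⟨f, hf⟩ e
    simpa only [facetBasis_apply, Subtype.ext_iff, Basis.coord_apply] using hrepr
  obtain ⟨u', hu', hne, hone⟩ := exists_ne_forall_apply_eq_one h.polarDual_eq hu
    (g := (h.facetBasis hu).coord e) (fun hzero => by simpa [hzero] using hcoord e e.2)
    (fun f hf => by rw [hcoord f hf]; split_ifs <;> simp)
  exact ⟨u', hu', hne, fun f hf hfe => hone f hf (by rw [hcoord f hf, if_neg hfe])⟩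

lemma apply_adjacent_eq_one (h : IsSimplicialReflexivePair V U) (hu : u ∈ U)
    {e : facetVertices V u} {u' : Dual ℝ E} (hu' : u' ∈ U) (hne : u' ≠ u)
    (hadj : ∀ f ∈ facetVertices V u, f ≠ e → u' f = 1) {v : E} (hv : v ∈ V) (huv : u v = 0)
    (hneg : (h.facetBasis hu).coord e v < 0) : u' v = 1 := by
  have hone (f : facetVertices V u) : u f = 1 := (mem_facetVertices.1 f.2).2
  have hu'_eq : u' = u + (u' e - 1) • (h.facetBasis hu).coord e := by
    have hform := dual_eq_add_smul_coord (h.facetBasis hu) (f := u') (g := u) (j := e)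
      fun f hf => by
        rw [facetBasis_apply, hone, hadj f f.2 (Subtype.coe_ne_coe.2 hf)]
    rwa [facetBasis_apply, hone] at hform
  have hlt : u' e < 1 := by
    refine (h.apply_le_one hu' e (mem_facetVertices.1 e.2).1).lt_of_ne fun heq => hne ?_
    rwa [heq, sub_self, zero_smul, add_zero] at hu'_eq
  have hpos : 0 < u' v := by
    rw [hu'_eq, LinearMap.add_apply, LinearMap.smul_apply, huv, zero_add]
    exact mul_pos_of_neg_of_neg (sub_neg.2 hlt) hneg
  obtain ⟨n, hn⟩ := h.exists_int u' hu' v hv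
  have hle := h.apply_le_one hu' v hv
  rw [hn] at hpos hle ⊢
  norm_cast at hpos hle ⊢
  omega

lemma eq_of_mem_facetVertices_adjacent (h : IsSimplicialReflexivePair V U) (hu : u ∈ U)
    {e : facetVertices V u} {u' : Dual ℝ E} (hu' : u' ∈ U)
    (hadj : ∀ f ∈ facetVertices V u, f ≠ e → u' f = 1) {v w : E}
    (hv : v ∈ facetVertices V u') (hw : w ∈ facetVertices V u')
    (hvu : v ∉ facetVertices V u) (hwu : w ∉ facetVertices V u) : v = w := by
  classical
  by_contra hvw
  have hsub : insert v (insert w ((facetVertices V u).erase e)) ⊆ facetVertices V u' := by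
    refine Finset.insert_subset hv (Finset.insert_subset hw fun f hf => ?_)
    obtain ⟨hfe, hf⟩ := Finset.mem_erase.1 hf
    exact mem_facetVertices.2 ⟨(mem_facetVertices.1 hf).1, hadj f hf hfe⟩
  have hcard := Finset.card_le_card hsub
  rw [Finset.card_insert_of_notMem (by simp [hvw, hvu]),
    Finset.card_insert_of_notMem (by simp [hwu]), Finset.card_erase_add_one e.2,
    h.card_facetVertices u hu, h.card_facetVertices u' hu'] at hcard
  omega

lemma card_filter_apply_eq_zero_le (h : IsSimplicialReflexivePair V U) (hu : u ∈ U) :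
    (V.filter fun v => u v = 0).card ≤ finrank ℝ E := by
  have hle : (V.filter fun v => u v = 0).card ≤
      (Finset.univ : Finset (facetVertices V u)).card := by
    refine Finset.card_le_card_of_forall_subsingleton
      (fun v e => (h.facetBasis hu).coord e v < 0) (fun v hv => ?_) fun e _ => ?_
    · obtain ⟨hv, huv⟩ := Finset.mem_filter.1 hv
      exact (h.exists_coord_neg hu hv huv).imp fun e he => ⟨Finset.mem_univ e, he⟩
    · obtain ⟨u', hu', hne, hadj⟩ := h.exists_adjacent hu e
      have hnew {v : E} (hv : v ∈ V.filter fun v => u v = 0)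
          (hneg : (h.facetBasis hu).coord e v < 0) :
          v ∈ facetVertices V u' ∧ v ∉ facetVertices V u := by
        obtain ⟨hv, huv⟩ := Finset.mem_filter.1 hv
        exact ⟨mem_facetVertices.2 ⟨hv, h.apply_adjacent_eq_one hu hu' hne hadj hv huv hneg⟩,
          fun hmem => by simp [(mem_facetVertices.1 hmem).2] at huv⟩
      rintro v ⟨hv, hvneg⟩ w ⟨hw, hwneg⟩
      exact h.eq_of_mem_facetVertices_adjacent hu hu' hadj (hnew hv hvneg).1 (hnew hw hwneg).1
        (hnew hv hvneg).2 (hnew hw hwneg).2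
  simpa [h.card_facetVertices u hu] using hle

lemma apply_le_indicator (h : IsSimplicialReflexivePair V U) (hu : u ∈ U) {v : E} (hv : v ∈ V) :
    u v ≤ 2 * (if u v = 1 then 1 else 0) + (if u v = 0 then 1 else 0) - 1 := by
  obtain ⟨n, hn⟩ := h.exists_int u hu v hv
  have hle : n ≤ 1 := by exact_mod_cast hn ▸ h.apply_le_one hu v hv
  obtain rfl | rfl | hn_neg : n = 1 ∨ n = 0 ∨ n ≤ -1 := by omega
  · norm_num [hn]
  · norm_num [hn]
  · have huv : u v ≤ -1 := by rw [hn]; exact_mod_cast hn_neg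
    rw [if_neg (by linarith), if_neg (by linarith)]
    linarith

lemma sum_indicator_le (h : IsSimplicialReflexivePair V U) (hu : u ∈ U) :
    ∑ v ∈ V, ((2 : ℝ) * (if u v = 1 then 1 else 0) + (if u v = 0 then 1 else 0) - 1) ≤
      3 * finrank ℝ E - V.card := by
  have hone : ((V.filter fun v => u v = 1).card : ℝ) = finrank ℝ E :=
    congrArg Nat.cast (h.card_facetVertices u hu)
  have hzero : ((V.filter fun v => u v = 0).card : ℝ) ≤ finrank ℝ E :=
    Nat.cast_le.2 (h.card_filter_apply_eq_zero_le hu)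
  rw [Finset.sum_sub_distrib, Finset.sum_add_distrib, ← Finset.mul_sum, Finset.sum_boole,
    Finset.sum_boole, Finset.sum_const, nsmul_one, hone]
  linarith

lemma apply_sum_le (h : IsSimplicialReflexivePair V U) {f : Dual ℝ E}
    (hf : f ∈ polarDual (V : Set E)) : f (∑ v ∈ V, v) ≤ 3 * finrank ℝ E - V.card := by
  refine apply_le_of_mem_convexHull (f := Dual.eval ℝ E (∑ v ∈ V, v)) (fun u hu => ?_)
    (h.polarDual_eq ▸ hf)
  rw [Dual.eval_apply, map_sum]
  exact (Finset.sum_le_sum fun v hv => h.apply_le_indicator hu hv).trans (h.sum_indicator_le hu)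

theorem card_le (h : IsSimplicialReflexivePair V U) : V.card ≤ 3 * finrank ℝ E := by
  have hle := h.apply_sum_le (f := 0) fun _ _ => zero_le_one
  rw [LinearMap.zero_apply, sub_nonneg] at hle
  exact_mod_cast hle

lemma neg_one_le_apply (h : IsSimplicialReflexivePair V U) (hcard : V.card = 3 * finrank ℝ E)
    (hu : u ∈ U) : ∀ v ∈ V, -1 ≤ u v := by
  have hbound : (3 : ℝ) * finrank ℝ E - V.card = 0 := by simp [hcard]
  -- A small multiple of `-u` lies in the dual polytope, where the vertex sum is nonpositive.
  have hnonneg : 0 ≤ u (∑ v ∈ V, v) := by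
    obtain ⟨t, hmem, ht⟩ := ((eventually_add_smul_mem_polarDual (V := V) (u := 0) (g := -u)
      (fun _ _ => zero_le_one) fun v hv => by simp [mem_facetVertices] at hv).and
        self_mem_nhdsWithin).exists
    have hle := h.apply_sum_le hmem
    rw [hbound, zero_add, LinearMap.smul_apply, LinearMap.neg_apply, smul_neg,
      neg_nonpos] at hle
    exact nonneg_of_mul_nonneg_right hle ht
  have heq := (Finset.sum_eq_sum_iff_of_le fun v hv => h.apply_le_indicator hu hv).1
    ((Finset.sum_le_sum fun v hv => h.apply_le_indicator hu hv).antisymm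
      (((h.sum_indicator_le hu).trans_eq hbound).trans (map_sum u id V ▸ hnonneg)))
  intro v hv
  rw [heq v hv]
  split_ifs <;> norm_num

lemma neg_mem_convexHull [TopologicalSpace E] [IsTopologicalAddGroup E] [ContinuousSMul ℝ E]
    [LocallyConvexSpace ℝ E] [T2Space E] (h : IsSimplicialReflexivePair V U)
    (h0 : (0 : E) ∈ convexHull ℝ (V : Set E)) (hcard : V.card = 3 * finrank ℝ E) {x : E}
    (hx : x ∈ convexHull ℝ (V : Set E)) : -x ∈ convexHull ℝ (V : Set E) := by
  refine mem_of_forall_mem_polarDual_apply_le (convex_convexHull ℝ _)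
    (V.finite_toSet.isClosed_convexHull ℝ) h0 fun f hf => ?_
  rw [polarDual_convexHull, h.polarDual_eq] at hf
  refine apply_le_of_mem_convexHull (f := Dual.eval ℝ E (-x)) (fun u hu => ?_) hf
  have hle : (-u) x ≤ 1 := apply_le_of_mem_convexHull (fun v hv => by
    simpa using neg_le.1 (h.neg_one_le_apply hcard hu v hv)) hx
  simpa using hle

theorem even_card [TopologicalSpace E] [IsTopologicalAddGroup E] [ContinuousSMul ℝ E]
    [LocallyConvexSpace ℝ E] [T2Space E] (h : IsSimplicialReflexivePair V U)
    (hV : (V : Set E) = Set.extremePoints ℝ (convexHull ℝ (V : Set E)))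
    (h0 : (0 : E) ∈ convexHull ℝ (V : Set E)) (hcard : V.card = 3 * finrank ℝ E) :
    Even V.card := by
  have : IsAddTorsionFree E := .of_isTorsionFree ℝ E
  refine even_card_of_neg_mem (fun v hv => ?_) h.zero_notMem
  rw [← Finset.mem_coe, hV] at hv ⊢
  exact neg_mem_extremePoints (fun x hx => h.neg_mem_convexHull h0 hcard hx) hv

end IsSimplicialReflexivePair

section Lattice

variable {d : ℕ}

lemma IsLatticePolytope.exists_finset_eq_extremePoints {P : Set (Fin d → ℝ)}
    (hP : IsLatticePolytope P) :
    ∃ V : Finset (Fin d → ℝ), (V : Set (Fin d → ℝ)) = Set.extremePoints ℝ P ∧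
      (∀ v ∈ V, IsLP v) ∧ convexHull ℝ (V : Set (Fin d → ℝ)) = P := by
  obtain ⟨S, hS, rfl⟩ := hP
  have hsub : Set.extremePoints ℝ (convexHull ℝ (S : Set (Fin d → ℝ))) ⊆ S :=
    extremePoints_convexHull_subset
  have hfin := S.finite_toSet.subset hsub
  have hhull := closure_convexHull_extremePoints (S.finite_toSet.isCompact_convexHull ℝ)
    (convex_convexHull ℝ (S : Set (Fin d → ℝ)))
  rw [(hfin.isClosed_convexHull ℝ).closure_eq] at hhull
  exact ⟨hfin.toFinset, hfin.coe_toFinset, fun v hv => hS v (hsub (hfin.mem_toFinset.1 hv)),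
    by rwa [hfin.coe_toFinset]⟩

lemma IsLP.exists_int_dotp {x y : Fin d → ℝ} (hx : IsLP x) (hy : IsLP y) :
    ∃ n : ℤ, dotp x y = n := by
  choose a ha using hx
  choose b hb using hy
  exact ⟨∑ i, a i * b i, by simp [dotp, ha, hb]⟩

lemma dotProductEquiv_apply_eq_dotp (x y : Fin d → ℝ) :
    dotProductEquiv ℝ (Fin d) x y = dotp x y := rfl

lemma image_dualPolytope (P : Set (Fin d → ℝ)) :
    dotProductEquiv ℝ (Fin d) '' dualPolytope P = polarDual P := by
  rw [LinearEquiv.image_eq_preimage_symm]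
  ext f
  simp only [Set.mem_preimage, dualPolytope, polarDual, Set.mem_ofPred_eq,
    ← dotProductEquiv_apply_eq_dotp, LinearEquiv.apply_symm_apply]

lemma IsSimplicial.card_facetVertices {P : Set (Fin d → ℝ)} (hs : IsSimplicial P) (hd : 1 ≤ d)
    {V : Finset (Fin d → ℝ)} (hV : (V : Set (Fin d → ℝ)) = Set.extremePoints ℝ P)
    {u : Dual ℝ (Fin d → ℝ)} (hu : u ∈ polarDual P)
    (hspan : Submodule.span ℝ (facetVertices V u : Set (Fin d → ℝ)) = ⊤) :
    (facetVertices V u).card = d := by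
  let F : Set (Fin d → ℝ) := {x ∈ P | u x = 1}
  have hF : Set.extremePoints ℝ F = facetVertices V u := by
    rw [(isExtreme_setOf_apply_eq hu).extremePoints_eq, ← hV]
    ext v
    have hVP : v ∈ V → v ∈ P := fun hv => extremePoints_subset (hV ▸ Finset.mem_coe.2 hv)
    simp only [Set.mem_inter_iff, Set.mem_ofPred_eq, Finset.mem_coe, mem_facetVertices]
    tauto
  have hsub : (facetVertices V u : Set (Fin d → ℝ)) ⊆ F := hF ▸ extremePoints_subset
  have hne : F.Nonempty := by
    have : Nonempty (Fin d) := ⟨⟨0, hd⟩⟩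
    refine Set.Nonempty.mono hsub (Set.nonempty_iff_ne_empty.2 fun hempty => ?_)
    rw [hempty, Submodule.span_empty] at hspan
    exact bot_ne_top hspan
  have hdim : finrank ℝ (vectorSpan ℝ F) = d - 1 := by
    simpa using finrank_vectorSpan_of_span_eq_top hne (fun x hx => hx.2)
      (top_le_iff.1 (hspan ▸ Submodule.span_mono hsub))
  obtain ⟨w, rfl⟩ := (dotProductEquiv ℝ (Fin d)).surjective u
  have hcard := hs F ⟨w, hne, hu, rfl, hdim⟩
  rwa [hF, Set.ncard_coe_finset] at hcard

lemma IsReflexive.exists_isSimplicialReflexivePair {P : Set (Fin d → ℝ)} (hP : IsReflexive P)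
    (hd : 1 ≤ d) (hs : IsSimplicial P) :
    ∃ (V : Finset (Fin d → ℝ)) (U : Finset (Dual ℝ (Fin d → ℝ))),
      IsSimplicialReflexivePair V U ∧ (V : Set (Fin d → ℝ)) = Set.extremePoints ℝ P ∧
        convexHull ℝ (V : Set (Fin d → ℝ)) = P := by
  obtain ⟨hP, h0, hdual⟩ := hP
  obtain ⟨V, hV, hVint, hVP⟩ := hP.exists_finset_eq_extremePoints
  obtain ⟨W, hW, hWint, hWdual⟩ := hdual.exists_finset_eq_extremePoints
  let Φ := dotProductEquiv ℝ (Fin d)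
  have hPV : polarDual (V : Set (Fin d → ℝ)) = polarDual P := by rw [← hVP, polarDual_convexHull]
  have hext {w : Fin d → ℝ} (hw : w ∈ W) :
      Φ w ∈ Set.extremePoints ℝ (polarDual (V : Set (Fin d → ℝ))) := by
    rw [hPV, ← image_dualPolytope, ← image_extremePoints, ← hW]
    exact Set.mem_image_of_mem Φ hw
  refine ⟨V, W.map Φ.toEquiv.toEmbedding, ⟨?_, ?_, ?_, ?_, ?_⟩, hV, hVP⟩
  · rw [hPV, ← image_dualPolytope, ← hWdual, Finset.coe_map]
    exact Φ.toLinearMap.image_convexHull _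
  · exact Finset.forall_mem_map.2 fun w hw v hv => (hWint w hw).exists_int_dotp (hVint v hv)
  · refine Finset.forall_mem_map.2 fun w hw => ?_
    rw [Module.finrank_fin_fun]
    exact hs.card_facetVertices hd hV (hPV ▸ (hext hw).1) (span_facetVertices_eq_top (hext hw))
  · exact Finset.forall_mem_map.2 fun w hw => span_facetVertices_eq_top (hext hw)
  · have : Nonempty (Fin d) := ⟨⟨0, hd⟩⟩
    rw [← Finset.mem_coe, hV]
    exact Set.disjoint_left.1 (disjoint_interior_extremePoints P) h0

end Lattice

/-- Casagrande: a `d`-dimensional simplicial reflexive polytope has at most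
`3d` vertices if `d` is even, and at most `3d-1` if `d` is odd. -/
theorem stmt2 {d : ℕ} (hd : 1 ≤ d) (P : Set (Fin d → ℝ))
    (hP : IsReflexive P) (hs : IsSimplicial P) :
    (Set.extremePoints ℝ P).ncard ≤ if Even d then 3 * d else 3 * d - 1 := by
  obtain ⟨V, U, h, hV, hPV⟩ := hP.exists_isSimplicialReflexivePair hd hs
  rw [← hV, Set.ncard_coe_finset]
  have hle : V.card ≤ 3 * d := by simpa using h.card_le
  split_ifs with hd_even
  · exact hle
  · have hne : V.card ≠ 3 * d := fun heq => by
      have hV_even : Even V.card :=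
        h.even_card (by rw [hPV, hV]) (hPV ▸ interior_subset hP.2.1) (by simpa using heq)
      rw [heq, Nat.even_mul] at hV_even
      exact hV_even.elim (by decide) hd_even
    omega
end
end

section
/- Let P ⊆ ℝ^d be a d-dimensional reflexive polytope and let v, w be lattice points on the boundary ∂P of P. Then the following are equivalent: (i) v + w ≠ 0 and v and w do not lie on a common facet of P; (ii) v + w is a lattice point on ∂P. -/
noncomputable section

/-!
Everything is read off from the vertices `u` of the lattice polytope `P*`. By the bipolar theorem
and Krein–Milman, `x ∈ P` iff `⟨u, x⟩ ≤ 1` for all these `u`, and `⟨u, x⟩` is an integer whenever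
`x` is a lattice point.
* If `v + w ∉ P`, some vertex `u` has `⟨u, v⟩ + ⟨u, w⟩ > 1`; both terms are integers `≤ 1`, hence
  both equal `1`, and `v`, `w` lie on the face `{⟨u, ·⟩ = 1}` of `P`. This face is a facet: the
  directions in which `u` is the unique maximizer over `P*` form a nonempty open cone, and it is
  contained in the cone over the face.
* If `x` is a lattice point in the interior of `P`, then `⟨u, x⟩ < 1`, so `⟨u, x⟩ ≤ 0`, for every
  vertex `u`; then `P` contains the ray through `x`, and `x = 0` since `P` is bounded.
* Conversely, on a common facet with normal `u` one has `⟨u, v + w⟩ = 2`, so `v + w ∉ P`.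
-/

section LinearAlgebra

variable {K V : Type*} [Field K] [AddCommGroup V] [Module K V] {s : Set V} {f : V →ₗ[K] K} {c : K}

theorem vectorSpan_eq_ker (hspan : Submodule.span K s = ⊤) (hs : s.Nonempty) (hc : c ≠ 0)
    (hf : ∀ y ∈ s, f y = c) : vectorSpan K s = LinearMap.ker f := by
  obtain ⟨v, hv⟩ := hs
  apply le_antisymm
  · rw [vectorSpan_eq_span_vsub_set_right K hv, Submodule.span_le]
    rintro _ ⟨y, hy, rfl⟩
    simp [hf y hy, hf v hv]
  · have project_mem (x : V) : x - (c⁻¹ * f x) • v ∈ vectorSpan K s := by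
      induction hspan ▸ Submodule.mem_top (x := x) using Submodule.span_induction with
      | mem y hy => simpa [hf y hy, hc] using vsub_mem_vectorSpan K hy hv
      | zero => simp
      | add x y _ _ hx hy => convert add_mem hx hy using 1; rw [map_add]; module
      | smul a x _ hx => convert Submodule.smul_mem _ a hx using 1; rw [map_smul]; module
    intro x hx
    simpa [LinearMap.mem_ker.1 hx] using project_mem x

end LinearAlgebra

theorem eq_zero_of_forall_nonneg_smul_mem {E : Type*} [NormedAddCommGroup E] [NormedSpace ℝ E]
    {s : Set E} (hs : Bornology.IsBounded s) {x : E} (hx : ∀ t : ℝ, 0 ≤ t → t • x ∈ s) : x = 0 := by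
  obtain ⟨C, hC⟩ := hs.exists_norm_le
  by_contra hne
  obtain ⟨n, hn⟩ := Archimedean.arch (C + 1) (norm_pos_iff.2 hne)
  have hle : n • ‖x‖ ≤ C := by simpa [norm_smul] using hC _ (hx n n.cast_nonneg)
  linarith

section LocallyConvex

variable {E : Type*} [AddCommGroup E] [Module ℝ E] [TopologicalSpace E] [IsTopologicalAddGroup E]
  [ContinuousSMul ℝ E]

theorem apply_lt_of_mem_interior {s : Set E} {f : E →L[ℝ] ℝ} (hf : f ≠ 0) {c : ℝ}
    (hs : ∀ y ∈ s, f y ≤ c) {x : E} (hx : x ∈ interior s) : f x < c := by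
  have himage : f '' interior s ⊆ interior (Set.Iic c) :=
    interior_maximal (Set.image_subset_iff.2 fun y hy => hs y (interior_subset hy))
      (f.isOpenMap_of_ne_zero hf _ isOpen_interior)
  rw [interior_Iic] at himage
  exact himage (Set.mem_image_of_mem f hx)

variable [LocallyConvexSpace ℝ E] [T2Space E] {C : Set E}

theorem apply_le_of_forall_mem_extremePoints (hC : IsCompact C) (hconv : Convex ℝ C)
    {f : E →L[ℝ] ℝ} {c : ℝ} (hf : ∀ u ∈ C.extremePoints ℝ, f u ≤ c) : ∀ u ∈ C, f u ≤ c := by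
  have hsub : closure (convexHull ℝ (C.extremePoints ℝ)) ⊆ {u | f u ≤ c} :=
    closure_minimal (convexHull_min hf (convex_halfSpace_le f.toLinearMap.isLinear c))
      (isClosed_le f.continuous continuous_const)
  rwa [closure_convexHull_extremePoints hC hconv] at hsub

theorem exists_forall_apply_lt_of_mem_extremePoints (hconv : Convex ℝ C) {u : E}
    (hu : u ∈ C.extremePoints ℝ) {s : Set E} (hs : s.Finite) (hsC : s ⊆ C \ {u}) :
    ∃ f : E →L[ℝ] ℝ, ∀ x ∈ s, f x < f u := by
  have hnot : u ∉ convexHull ℝ s := fun h =>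
    (convexHull_min hsC (hconv.mem_extremePoints_iff_convex_sdiff.1 hu).2 h).2 rfl
  obtain ⟨f, a, hlt, hgt⟩ := geometric_hahn_banach_closed_point (convex_convexHull ℝ s)
    (hs.isCompact_convexHull (𝕜 := ℝ)).isClosed hnot
  exact ⟨f, fun x hx => (hlt x (subset_convexHull ℝ s hx)).trans hgt⟩

end LocallyConvex

variable {d : ℕ}

/-- The functional `⟨u, ·⟩` as a continuous linear map, the form in which separation and
Krein–Milman arguments produce and use it. -/
def dotpCLM (u : Fin d → ℝ) : (Fin d → ℝ) →L[ℝ] ℝ :=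
  (dotProductEquiv ℝ (Fin d) u).toContinuousLinearMap

theorem dotpCLM_apply (u y : Fin d → ℝ) : dotpCLM u y = dotp u y := rfl

theorem dotpCLM_surjective : Function.Surjective (dotpCLM (d := d)) :=
  LinearMap.toContinuousLinearMap.surjective.comp (dotProductEquiv ℝ (Fin d)).surjective

theorem dotpCLM_ne_zero {u : Fin d → ℝ} (hu : u ≠ 0) : dotpCLM u ≠ 0 := fun h =>
  hu (dotProduct_self_eq_zero.1 (DFunLike.congr_fun h u))

theorem dotp_comm (x y : Fin d → ℝ) : dotp x y = dotp y x := dotProduct_comm x y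

theorem dotp_add (u x y : Fin d → ℝ) : dotp u (x + y) = dotp u x + dotp u y :=
  dotProduct_add u x y

theorem dotp_smul (u : Fin d → ℝ) (c : ℝ) (x : Fin d → ℝ) : dotp u (c • x) = c * dotp u x :=
  dotProduct_smul c u x

theorem zero_dotp (x : Fin d → ℝ) : dotp 0 x = 0 := zero_dotProduct x

namespace IsLP

variable {u v w : Fin d → ℝ}

theorem add (hv : IsLP v) (hw : IsLP w) : IsLP (v + w) := fun i => by
  obtain ⟨a, ha⟩ := hv i
  obtain ⟨b, hb⟩ := hw i
  exact ⟨a + b, by simp [ha, hb]⟩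

theorem exists_dotp_eq_intCast (hu : IsLP u) (hv : IsLP v) : ∃ n : ℤ, dotp u v = n := by
  choose a ha using hu
  choose b hb using hv
  exact ⟨∑ i, a i * b i, by simp [dotp, ha, hb]⟩

theorem dotp_nonpos_of_lt_one (hu : IsLP u) (hv : IsLP v) (h : dotp u v < 1) : dotp u v ≤ 0 := by
  obtain ⟨n, hn⟩ := hu.exists_dotp_eq_intCast hv
  rw [hn] at h ⊢
  exact_mod_cast Int.lt_add_one_iff.1 (by exact_mod_cast h)

theorem dotp_eq_one_of_one_lt_dotp_add (hu : IsLP u) (hv : IsLP v) (huv : dotp u v ≤ 1)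
    (huw : dotp u w ≤ 1) (h : 1 < dotp u (v + w)) : dotp u v = 1 := by
  by_contra hne
  have hv_nonpos : dotp u v ≤ 0 := hu.dotp_nonpos_of_lt_one hv (lt_of_le_of_ne huv hne)
  rw [dotp_add] at h
  linarith

end IsLP

namespace IsLatticePolytope

variable {P : Set (Fin d → ℝ)}

theorem isCompact (h : IsLatticePolytope P) : IsCompact P := by
  obtain ⟨V, -, rfl⟩ := h
  exact V.finite_toSet.isCompact_convexHull (𝕜 := ℝ)

theorem convex (h : IsLatticePolytope P) : Convex ℝ P := by
  obtain ⟨V, -, rfl⟩ := h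
  exact convex_convexHull ℝ _

theorem finite_extremePoints (h : IsLatticePolytope P) : (P.extremePoints ℝ).Finite := by
  obtain ⟨V, -, rfl⟩ := h
  exact V.finite_toSet.subset extremePoints_convexHull_subset

theorem isLP_of_mem_extremePoints (h : IsLatticePolytope P) {u : Fin d → ℝ}
    (hu : u ∈ P.extremePoints ℝ) : IsLP u := by
  obtain ⟨V, hV, rfl⟩ := h
  exact hV u (extremePoints_convexHull_subset hu)

end IsLatticePolytope

section Duality

variable {P : Set (Fin d → ℝ)} {u x : Fin d → ℝ}

theorem convex_dualPolytope (P : Set (Fin d → ℝ)) : Convex ℝ (dualPolytope P) := by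
  have hinter : dualPolytope P = ⋂ y ∈ P, {x | dotpCLM y x ≤ 1} := by
    ext x
    simp only [dualPolytope, dotpCLM_apply, dotp_comm x, Set.mem_ofPred_eq, Set.mem_iInter]
  rw [hinter]
  exact convex_iInter₂ fun y _ => convex_halfSpace_le (dotpCLM y).toLinearMap.isLinear 1

theorem zero_mem_dualPolytope (P : Set (Fin d → ℝ)) : 0 ∈ dualPolytope P := fun y _ => by
  rw [zero_dotp]
  exact zero_le_one

theorem mem_of_forall_mem_dualPolytope (hP : IsClosed P) (hconv : Convex ℝ P) (h0 : 0 ∈ P)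
    (hx : ∀ u ∈ dualPolytope P, dotp u x ≤ 1) : x ∈ P := by
  by_contra hxP
  obtain ⟨f, s, hlt, hgt⟩ := geometric_hahn_banach_closed_point hconv hP hxP
  have hs : 0 < s := by simpa using hlt 0 h0
  obtain ⟨a, ha⟩ := dotpCLM_surjective (s⁻¹ • f)
  have dotp_a (y : Fin d → ℝ) : dotp a y = s⁻¹ * f y := DFunLike.congr_fun ha y
  have ha_mem : a ∈ dualPolytope P := fun y hy => by
    rw [dotp_a, inv_mul_le_one₀ hs]
    exact (hlt y hy).le
  have hxs : f x ≤ s := by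
    rw [← inv_mul_le_one₀ hs, ← dotp_a]
    exact hx a ha_mem
  exact hgt.not_ge hxs

theorem mem_of_forall_mem_extremePoints_dualPolytope (hP : IsClosed P) (hconv : Convex ℝ P)
    (h0 : 0 ∈ P) (hD : IsCompact (dualPolytope P))
    (hx : ∀ u ∈ (dualPolytope P).extremePoints ℝ, dotp u x ≤ 1) : x ∈ P := by
  apply mem_of_forall_mem_dualPolytope hP hconv h0
  simp only [dotp_comm _ x, ← dotpCLM_apply] at hx ⊢
  exact apply_le_of_forall_mem_extremePoints hD (convex_dualPolytope P) hx

theorem mem_span_face (hP : IsClosed P) (hconv : Convex ℝ P) (h0 : 0 ∈ P)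
    (hD : IsCompact (dualPolytope P)) (hpos : 0 < dotp u x)
    (hmax : ∀ q ∈ (dualPolytope P).extremePoints ℝ, dotp q x ≤ dotp u x) :
    x ∈ Submodule.span ℝ {y ∈ P | dotp u y = 1} := by
  have hmem : (dotp u x)⁻¹ • x ∈ P := by
    refine mem_of_forall_mem_extremePoints_dualPolytope hP hconv h0 hD fun q hq => ?_
    rw [dotp_smul, inv_mul_le_one₀ hpos]
    exact hmax q hq
  have hface : dotp u ((dotp u x)⁻¹ • x) = 1 := by
    rw [dotp_smul, inv_mul_cancel₀ hpos.ne']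
  rw [← smul_inv_smul₀ hpos.ne' x]
  exact Submodule.smul_mem _ _ (Submodule.subset_span ⟨hmem, hface⟩)

theorem span_face_eq_top (hP : IsClosed P) (hconv : Convex ℝ P) (h0 : 0 ∈ P)
    (hD : IsCompact (dualPolytope P)) (hfin : ((dualPolytope P).extremePoints ℝ).Finite)
    (hu : u ∈ (dualPolytope P).extremePoints ℝ) (hu0 : u ≠ 0) :
    Submodule.span ℝ {y ∈ P | dotp u y = 1} = ⊤ := by
  -- Including `0` among the competitors of `u` makes `⟨u, ·⟩` positive on the cone `N` below.
  set s : Set (Fin d → ℝ) := insert 0 ((dualPolytope P).extremePoints ℝ) \ {u}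
  have hs : s.Finite := (hfin.insert 0).sdiff
  have hs_sub : s ⊆ dualPolytope P \ {u} :=
    Set.sdiff_subset_sdiff_left
      (Set.insert_subset (zero_mem_dualPolytope P) extremePoints_subset)
  set N : Set (Fin d → ℝ) := {y | ∀ q ∈ s, dotp q y < dotp u y}
  have hN_open : IsOpen N := by
    have hinter : N = ⋂ q ∈ s, {y | dotpCLM q y < dotpCLM u y} := by
      ext y
      simp only [N, dotpCLM_apply, Set.mem_iInter, Set.mem_ofPred_eq]
    rw [hinter]
    exact hs.isOpen_biInter fun q _ => isOpen_lt (dotpCLM q).continuous (dotpCLM u).continuous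
  have hN_nonempty : N.Nonempty := by
    obtain ⟨f, hf⟩ :=
      exists_forall_apply_lt_of_mem_extremePoints (convex_dualPolytope P) hu hs hs_sub
    obtain ⟨z, rfl⟩ := dotpCLM_surjective f
    simp only [dotpCLM_apply, dotp_comm z] at hf
    exact ⟨z, hf⟩
  have hN_span : N ⊆ Submodule.span ℝ {y ∈ P | dotp u y = 1} := by
    intro y hy
    have hpos : 0 < dotp u y := by
      simpa only [zero_dotp] using hy 0 ⟨Set.mem_insert _ _, hu0.symm⟩
    refine mem_span_face hP hconv h0 hD hpos fun q hq => ?_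
    rcases eq_or_ne q u with rfl | hqu
    · exact le_rfl
    · exact (hy q ⟨Set.mem_insert_of_mem 0 hq, hqu⟩).le
  exact Submodule.eq_top_of_nonempty_interior' _
    (hN_nonempty.mono (interior_maximal hN_span hN_open))

theorem isFacet_of_mem_extremePoints_dualPolytope (hP : IsClosed P) (hconv : Convex ℝ P)
    (h0 : 0 ∈ P) (hD : IsCompact (dualPolytope P))
    (hfin : ((dualPolytope P).extremePoints ℝ).Finite)
    (hu : u ∈ (dualPolytope P).extremePoints ℝ) (hu0 : u ≠ 0) :
    IsFacet P {y ∈ P | dotp u y = 1} := by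
  have hspan := span_face_eq_top hP hconv h0 hD hfin hu hu0
  have hnonempty : {y ∈ P | dotp u y = 1}.Nonempty := by
    by_contra hempty
    rw [Set.not_nonempty_iff_eq_empty.1 hempty, Submodule.span_empty] at hspan
    exact hu0 ((Submodule.mem_bot ℝ).1 (hspan ▸ Submodule.mem_top))
  have hker : vectorSpan ℝ {y ∈ P | dotp u y = 1} = LinearMap.ker (dotpCLM u).toLinearMap :=
    vectorSpan_eq_ker hspan hnonempty one_ne_zero fun _ hy => hy.2
  have hfinrank : Module.finrank ℝ (LinearMap.ker (dotpCLM u).toLinearMap) + 1 = d := by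
    rw [Module.Dual.finrank_ker_add_one_of_ne_zero, Module.finrank_fin_fun]
    exact fun h => dotpCLM_ne_zero hu0 (ContinuousLinearMap.coe_injective h)
  exact ⟨u, hnonempty, hu.1, rfl, by rw [hker]; lia⟩

theorem dotp_lt_one_of_mem_interior (hu : u ∈ dualPolytope P) (hx : x ∈ interior P) :
    dotp u x < 1 := by
  rcases eq_or_ne u 0 with rfl | hu0
  · rw [zero_dotp]
    exact zero_lt_one
  · exact apply_lt_of_mem_interior (dotpCLM_ne_zero hu0) hu hx

end Duality

section LatticeDual

variable {P : Set (Fin d → ℝ)} {v w x : Fin d → ℝ}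

theorem IsLP.eq_zero_of_mem_interior (hP : IsCompact P) (hconv : Convex ℝ P)
    (h0 : 0 ∈ P) (hD : IsLatticePolytope (dualPolytope P)) (hx : IsLP x)
    (hx_int : x ∈ interior P) : x = 0 := by
  refine eq_zero_of_forall_nonneg_smul_mem hP.isBounded fun t ht => ?_
  refine mem_of_forall_mem_extremePoints_dualPolytope hP.isClosed hconv h0 hD.isCompact
    fun u hu => ?_
  have hnonpos : dotp u x ≤ 0 :=
    (hD.isLP_of_mem_extremePoints hu).dotp_nonpos_of_lt_one hx
      (dotp_lt_one_of_mem_interior hu.1 hx_int)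
  rw [dotp_smul]
  exact (mul_nonpos_of_nonneg_of_nonpos ht hnonpos).trans zero_le_one

theorem IsLP.add_mem_of_not_exists_isFacet (hP : IsClosed P) (hconv : Convex ℝ P)
    (h0 : 0 ∈ P) (hD : IsLatticePolytope (dualPolytope P)) (hvL : IsLP v) (hwL : IsLP w)
    (hv : v ∈ P) (hw : w ∈ P) (h : ¬ ∃ F, IsFacet P F ∧ v ∈ F ∧ w ∈ F) : v + w ∈ P := by
  refine mem_of_forall_mem_extremePoints_dualPolytope hP hconv h0 hD.isCompact fun u hu => ?_
  by_contra! hgt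
  have huL : IsLP u := hD.isLP_of_mem_extremePoints hu
  have huv : dotp u v = 1 :=
    huL.dotp_eq_one_of_one_lt_dotp_add hvL (hu.1 v hv) (hu.1 w hw) hgt
  have huw : dotp u w = 1 :=
    huL.dotp_eq_one_of_one_lt_dotp_add hwL (hu.1 w hw) (hu.1 v hv) (add_comm v w ▸ hgt)
  have hu0 : u ≠ 0 := by
    rintro rfl
    exact zero_ne_one ((zero_dotp v).symm.trans huv)
  exact h ⟨_, isFacet_of_mem_extremePoints_dualPolytope hP hconv h0 hD.isCompact
    hD.finite_extremePoints hu hu0, ⟨hv, huv⟩, ⟨hw, huw⟩⟩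

end LatticeDual

theorem IsFacet.add_notMem {P F : Set (Fin d → ℝ)} (hF : IsFacet P F) {v w : Fin d → ℝ}
    (hv : v ∈ F) (hw : w ∈ F) : v + w ∉ P := by
  obtain ⟨u, -, hle, rfl, -⟩ := hF
  intro hvw
  have htwo := hle _ hvw
  rw [dotp_add, hv.2, hw.2] at htwo
  norm_num at htwo

theorem stmt5_general (P : Set (Fin d → ℝ)) (hP : IsCompact P) (hconv : Convex ℝ P)
    (h0 : 0 ∈ interior P) (hD : IsLatticePolytope (dualPolytope P)) (v w : Fin d → ℝ)
    (hv : v ∈ frontier P) (hw : w ∈ frontier P) (hvL : IsLP v) (hwL : IsLP w) :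
    (v + w ≠ 0 ∧ ¬ ∃ F, IsFacet P F ∧ v ∈ F ∧ w ∈ F) ↔
      (v + w ∈ frontier P ∧ IsLP (v + w)) := by
  have h0P : 0 ∈ P := interior_subset h0
  have hfrontier : frontier P ⊆ P := hP.isClosed.frontier_subset
  have hvwL : IsLP (v + w) := hvL.add hwL
  constructor
  · rintro ⟨hne, hfacet⟩
    have hmem : v + w ∈ P := hvL.add_mem_of_not_exists_isFacet hP.isClosed hconv h0P hD hwL
      (hfrontier hv) (hfrontier hw) hfacet
    have hnot_int : v + w ∉ interior P := fun hint =>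
      hne (hvwL.eq_zero_of_mem_interior hP hconv h0P hD hint)
    exact ⟨⟨subset_closure hmem, hnot_int⟩, hvwL⟩
  · rintro ⟨hfr, -⟩
    refine ⟨fun hzero => hfr.2 (hzero ▸ h0), ?_⟩
    rintro ⟨F, hF, hvF, hwF⟩
    exact hF.add_notMem hvF hwF (hfrontier hfr)

/-- for lattice points `v, w` on the boundary of a reflexive polytope `P`:
`v + w ≠ 0` and `v, w` lie on no common facet iff `v + w` is a lattice point on the boundary. -/
theorem stmt5 {d : ℕ} (P : Set (Fin d → ℝ)) (hP : IsReflexive P)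
    (v w : Fin d → ℝ) (hv : v ∈ frontier P) (hw : w ∈ frontier P)
    (hvL : IsLP v) (hwL : IsLP w) :
    (v + w ≠ 0 ∧ ¬ ∃ F, IsFacet P F ∧ v ∈ F ∧ w ∈ F) ↔
      (v + w ∈ frontier P ∧ IsLP (v + w)) := by
  exact stmt5_general P hP.1.isCompact hP.1.convex hP.2.1 hP.2.2 v w hv hw hvL hwL
end
end

section
/- Let P ⊆ ℝ^d be a d-dimensional simplicial reflexive polytope and F a facet of P. Suppose there are at least d−1 vertices e_1,…,e_{d−1} ∈ 𝒱(F) such that for every 1 ≤ i ≤ d−1 the neighboring vertex n(F,e_i) satisfies ⟨u_F, n(F,e_i)⟩ = 0 and ⟨u_F^{e_i}, n(F,e_i)⟩ = −1. Then 𝒱(F) is a ℤ-basis of the lattice ℤ^d. -/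
noncomputable section

/-- `F'` is the neighboring facet `N(F,w)`: a facet different from `F` containing all
vertices of `F` except `w`. -/
def NbrFacet {d : ℕ} (P F : Set (Fin d → ℝ)) (w : Fin d → ℝ) (F' : Set (Fin d → ℝ)) : Prop :=
  IsFacet P F' ∧ F' ≠ F ∧ Set.extremePoints ℝ F \ {w} ⊆ F'

/-- `v'` is the neighboring vertex `n(F,w)`: the vertex of the neighboring facet `N(F,w)`
not contained in `F`. -/
def NbrVertex {d : ℕ} (P F : Set (Fin d → ℝ)) (w v' : Fin d → ℝ) : Prop :=
  ∃ F', NbrFacet P F w F' ∧ v' ∈ Set.extremePoints ℝ F' ∧ v' ∉ F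

/-- The set `B` is a `ℤ`-basis of the lattice `ℤ^d`. -/
def IsZBasis {d : ℕ} (B : Set (Fin d → ℝ)) : Prop :=
  ∃ b : Fin d → (Fin d → ℝ), Function.Injective b ∧ Set.range b = B ∧
    (∀ i, IsLP (b i)) ∧ ∀ x : Fin d → ℝ, IsLP x → ∃ c : Fin d → ℤ, x = ∑ i, (c i : ℝ) • b i

/-! The normal `u` of a facet is a vertex of the dual polytope, hence a lattice point by
reflexivity, and it is the sum of the vectors dual to the vertices of the facet. Crossing to the
neighbouring facet opposite a vertex `v` with dual vector `w` changes the normal to `u - t • w` for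
some real `t`. If the neighbouring vertex `v'` satisfies `⟨u, v'⟩ = 0` and `⟨w, v'⟩ = -1`, then
evaluating the new normal at `v'` gives `t = 1`, so `w` is a difference of two lattice normals. If
this holds at all vertices but one, the remaining dual vector is `u` minus the others. So the whole
dual basis is integral, and its pairings with a lattice point are the coordinates of that point in
the basis of vertices. -/

section LinearAlgebra

variable {K V : Type*} [Field K] [AddCommGroup V] [Module K V]

lemma finrank_span_eq_finrank_vectorSpan_add_one [FiniteDimensional K V] {S : Set V}
    (hne : S.Nonempty) (f : Module.Dual K V) {c : K} (hc : c ≠ 0) (hf : ∀ y ∈ S, f y = c) :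
    Module.finrank K (Submodule.span K S) = Module.finrank K (vectorSpan K S) + 1 := by
  obtain ⟨z, hz⟩ := hne
  have hker : vectorSpan K S ≤ LinearMap.ker f := by
    rw [vectorSpan_eq_span_vsub_set_right K hz, Submodule.span_le]
    rintro _ ⟨y, hy, rfl⟩
    simp [hf y hy, hf z hz]
  have hz_notMem : z ∉ vectorSpan K S := fun h => hc (by rw [← hf z hz, hker h])
  have hspan : Submodule.span K S = vectorSpan K S ⊔ Submodule.span K {z} := by
    refine le_antisymm (Submodule.span_le.2 fun y hy => ?_) (sup_le ?_ ?_)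
    · rw [← sub_add_cancel y z]
      exact Submodule.add_mem_sup (vsub_mem_vectorSpan K hy hz)
        (Submodule.mem_span_singleton_self z)
    · rw [vectorSpan_eq_span_vsub_set_right K hz, Submodule.span_le]
      rintro _ ⟨y, hy, rfl⟩
      exact Submodule.sub_mem _ (Submodule.subset_span hy) (Submodule.subset_span hz)
    · exact Submodule.span_mono (Set.singleton_subset_iff.2 hz)
  rw [hspan, Submodule.finrank_sup_span_singleton hz_notMem]

lemma span_eq_top_of_exchange {S T : Set V} {v y : V} (f : Module.Dual K V)
    (hS : Submodule.span K S = ⊤) (hf : ∀ z ∈ S, z ≠ v → f z = 0) (hfy : f y ≠ 0)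
    (hST : S \ {v} ⊆ T) (hyT : y ∈ T) : Submodule.span K T = ⊤ := by
  have hker : Submodule.span K (S \ {v}) ≤ LinearMap.ker f :=
    Submodule.span_le.2 fun z hz => hf z hz.1 hz.2
  have hy : y ∈ Submodule.span K (insert v (S \ {v})) :=
    Submodule.span_mono (by simp) (hS ▸ Submodule.mem_top)
  have hv : v ∈ Submodule.span K T :=
    Submodule.span_mono (Set.insert_subset hyT hST)
      (mem_span_insert_exchange hy fun h => hfy (hker h))
  refine top_le_iff.1 (hS.ge.trans (Submodule.span_le.2 fun z hz => ?_))
  by_cases hzv : z = v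
  · exact hzv ▸ hv
  · exact Submodule.subset_span (hST ⟨hz, hzv⟩)

lemma span_convexHull [LinearOrder K] [IsStrictOrderedRing K] (S : Set V) :
    Submodule.span K (convexHull K S) = Submodule.span K S :=
  le_antisymm
    (Submodule.span_le.2 (convexHull_min Submodule.subset_span (Submodule.convex _)))
    (Submodule.span_mono (subset_convexHull K S))

end LinearAlgebra

lemma convexHull_extremePoints_of_isExposed {E : Type*} [AddCommGroup E] [Module ℝ E]
    [TopologicalSpace E] [T2Space E] [IsTopologicalAddGroup E] [ContinuousSMul ℝ E]
    [LocallyConvexSpace ℝ E] {V F : Set E} (hV : V.Finite)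
    (hF : IsExposed ℝ (convexHull ℝ V) F) : convexHull ℝ (F.extremePoints ℝ) = F := by
  have hfin : (F.extremePoints ℝ).Finite :=
    hV.subset (hF.isExtreme.extremePoints_subset_extremePoints.trans
      extremePoints_convexHull_subset)
  rw [← (hfin.isClosed_convexHull ℝ).closure_eq]
  exact closure_convexHull_extremePoints (hF.isCompact (hV.isCompact_convexHull ℝ))
    (hF.convex (convex_convexHull ℝ V))

lemma exists_mem_neg_of_zero_mem_interior {E : Type*} [NormedAddCommGroup E] [NormedSpace ℝ E]
    {P : Set E} (h0 : 0 ∈ interior P) {f : StrongDual ℝ E} (hf : f ≠ 0) : ∃ y ∈ P, f y < 0 := by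
  by_contra! hnonneg
  have hmin : IsLocalMin f 0 := by
    filter_upwards [mem_interior_iff_mem_nhds.1 h0] with y hy
    simpa using hnonneg y hy
  exact hf (hmin.hasFDerivAt_eq_zero f.hasFDerivAt)

-- `t` is the smallest ratio `(1 - f y) / (-g y)` over the `y` with `g y < 0`.
lemma exists_tilt {ι K : Type*} [Field K] [LinearOrder K] [IsStrictOrderedRing K] {V : Finset ι}
    {f g : ι → K} (hf : ∀ y ∈ V, f y ≤ 1) (hg : ∃ y ∈ V, g y < 0) :
    ∃ t, (∀ z ∈ V, f z - t * g z ≤ 1) ∧ ∃ y ∈ V, g y < 0 ∧ f y - t * g y = 1 := by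
  have hne : (V.filter (g · < 0)).Nonempty := by simpa [Finset.Nonempty] using hg
  obtain ⟨y, hy, hmin⟩ := Finset.exists_min_image _ (fun y => (1 - f y) / -g y) hne
  obtain ⟨hyV, hgy⟩ := Finset.mem_filter.1 hy
  refine ⟨(1 - f y) / -g y, fun z hz => ?_, y, hyV, hgy, ?_⟩
  · rcases lt_or_ge (g z) 0 with hgz | hgz
    · have hle := hmin z (Finset.mem_filter.2 ⟨hz, hgz⟩)
      rw [le_div_iff₀ (neg_pos.2 hgz)] at hle
      linarith
    · have hratio : 0 ≤ (1 - f y) / -g y :=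
        div_nonneg (sub_nonneg.2 (hf y hyV)) (neg_nonneg.2 hgy.le)
      linarith [hf z hz, mul_nonneg hratio hgz]
  · field_simp [hgy.ne]
    ring

section Dotp

variable {d : ℕ} {S : Set (Fin d → ℝ)} {u w x y z : Fin d → ℝ}

lemma dotp_eq_dotProductEquiv (x y : Fin d → ℝ) :
    dotp x y = dotProductEquiv ℝ (Fin d) x y := rfl

lemma dotp_sub_smul_left (u w z : Fin d → ℝ) (t : ℝ) :
    dotp (u - t • w) z = dotp u z - t * dotp w z := by
  simp [dotp_eq_dotProductEquiv]

lemma eq_of_forall_dotp_eq (hS : Submodule.span ℝ S = ⊤)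
    (h : ∀ z ∈ S, dotp x z = dotp y z) : x = y :=
  (dotProductEquiv ℝ (Fin d)).injective (LinearMap.ext_on hS h)

lemma exists_mem_dotp_neg {P : Set (Fin d → ℝ)} (h0 : 0 ∈ interior P) (hw : w ≠ 0) :
    ∃ y ∈ P, dotp w y < 0 := by
  refine exists_mem_neg_of_zero_mem_interior h0
    (f := (dotProductEquiv ℝ (Fin d) w).toContinuousLinearMap) ?_
  simpa using hw

lemma dotp_le_of_mem_convexHull {c : ℝ} (h : ∀ y ∈ S, dotp u y ≤ c) (hz : z ∈ convexHull ℝ S) :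
    dotp u z ≤ c :=
  convexHull_min h (convex_halfSpace_le (dotProductEquiv ℝ (Fin d) u).isLinear c) hz

lemma le_dotp_of_mem_convexHull {c : ℝ} (h : ∀ y ∈ S, c ≤ dotp u y) (hz : z ∈ convexHull ℝ S) :
    c ≤ dotp u z :=
  convexHull_min h (convex_halfSpace_ge (dotProductEquiv ℝ (Fin d) u).isLinear c) hz

end Dotp

section IntegerLattice

/-- The lattice `ℤ^d` as an additive subgroup of `ℝ^d`, giving access to closure under sums. -/
def integerLattice (d : ℕ) : AddSubgroup (Fin d → ℝ) :=
  ((Int.castAddHom ℝ).compLeft (Fin d)).range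

variable {d : ℕ} {x y : Fin d → ℝ}

lemma mem_integerLattice : x ∈ integerLattice d ↔ IsLP x := by
  refine ⟨?_, fun hx => ?_⟩
  · rintro ⟨n, rfl⟩ i
    exact ⟨n i, rfl⟩
  · choose n hn using hx
    exact ⟨n, funext fun i => (hn i).symm⟩

lemma IsLP.sub (hx : IsLP x) (hy : IsLP y) : IsLP (x - y) :=
  mem_integerLattice.1 (sub_mem (mem_integerLattice.2 hx) (mem_integerLattice.2 hy))

lemma IsLP.sum {ι : Type*} {s : Finset ι} {f : ι → Fin d → ℝ} (h : ∀ i ∈ s, IsLP (f i)) :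
    IsLP (∑ i ∈ s, f i) :=
  mem_integerLattice.1 (sum_mem fun i hi => mem_integerLattice.2 (h i hi))

lemma IsLP.exists_dotp_eq_intCast_s12 (hx : IsLP x) (hy : IsLP y) : ∃ n : ℤ, dotp x y = n := by
  choose f hf using hx
  choose g hg using hy
  exact ⟨∑ i, f i * g i, by simp [dotp, hf, hg]⟩

end IntegerLattice

section DualVectors

/-- `w` is the vector dual to `v` with respect to `S`, written `u_F^v` when `S = 𝒱(F)`. It is
determined by `S` and `v` when `S` spans the space. -/
def IsDualVector {d : ℕ} (S : Set (Fin d → ℝ)) (v w : Fin d → ℝ) : Prop :=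
  dotp w v = 1 ∧ ∀ v' ∈ S, v' ≠ v → dotp w v' = 0

variable {d : ℕ} {S : Set (Fin d → ℝ)} {u v w x : Fin d → ℝ} {f : (Fin d → ℝ) → (Fin d → ℝ)}

lemma IsDualVector.ne_zero (hw : IsDualVector S v w) : w ≠ 0 := by
  rintro rfl
  simpa [dotp] using hw.1

lemma IsDualVector.dotp_nonneg (hw : IsDualVector S v w) : ∀ z ∈ S, 0 ≤ dotp w z := by
  intro z hz
  by_cases hzv : z = v
  · rw [hzv, hw.1]
    exact zero_le_one
  · exact (hw.2 z hz hzv).ge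

lemma IsDualVector.eq_smul (hw : IsDualVector S v w) (hS : Submodule.span ℝ S = ⊤)
    (hx : ∀ z ∈ S, z ≠ v → dotp x z = 0) : x = dotp x v • w := by
  refine eq_of_forall_dotp_eq hS fun z hz => ?_
  have hsmul : dotp (dotp x v • w) z = dotp x v * dotp w z := by simp [dotp_eq_dotProductEquiv]
  by_cases hzv : z = v
  · rw [hsmul, hzv, hw.1, mul_one]
  · rw [hsmul, hx z hz hzv, hw.2 z hz hzv, mul_zero]

lemma linearIndependent_of_isDualVector (hf : ∀ v ∈ S, IsDualVector S v (f v)) :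
    LinearIndependent ℝ ((↑) : S → Fin d → ℝ) :=
  .of_pairwise_dual_eq_zero_one _ (fun v => dotProductEquiv ℝ (Fin d) (f v))
    (fun v v' hne => (hf v v.2).2 v' v'.2 (Subtype.coe_ne_coe.2 hne.symm))
    (fun v => (hf v v.2).1)

lemma exists_basis_of_isDualVector (hS : Submodule.span ℝ S = ⊤)
    (hf : ∀ v ∈ S, IsDualVector S v (f v)) :
    ∃ b : Module.Basis S ℝ (Fin d → ℝ), (∀ v, b v = v) ∧ ∀ x v, b.repr x v = dotp (f v) x := by
  have hli := linearIndependent_of_isDualVector hf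
  let b := Module.Basis.mk hli (by simp [hS])
  have hb : ∀ v, b v = v := Module.Basis.mk_apply hli _
  refine ⟨b, hb, fun x v => ?_⟩
  have hcoord : b.coord v = dotProductEquiv ℝ (Fin d) (f v) := b.ext fun v' => by
    rw [b.coord_apply, b.repr_self, hb, ← dotp_eq_dotProductEquiv]
    by_cases h : v' = v
    · rw [h, Finsupp.single_eq_same, (hf v v.2).1]
    · rw [Finsupp.single_eq_of_ne (Ne.symm h),
        (hf v v.2).2 v' v'.2 (Subtype.coe_ne_coe.2 h)]
  exact LinearMap.congr_fun hcoord x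

lemma sum_eq_of_isDualVector {T : Finset (Fin d → ℝ)}
    (hT : Submodule.span ℝ (T : Set (Fin d → ℝ)) = ⊤)
    (hf : ∀ v ∈ T, IsDualVector T v (f v)) (hu : ∀ v ∈ T, dotp u v = 1) :
    ∑ v ∈ T, f v = u := by
  refine eq_of_forall_dotp_eq hT fun z hz => ?_
  calc dotp (∑ v ∈ T, f v) z = ∑ v ∈ T, dotp (f v) z := by simp [dotp_eq_dotProductEquiv]
    _ = dotp (f z) z := Finset.sum_eq_single_of_mem z hz fun v hv hne => (hf v hv).2 z hz hne.symm
    _ = dotp u z := by rw [(hf z hz).1, hu z hz]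

lemma isLP_dualVector_of_forall_ne (hS : Submodule.span ℝ S = ⊤)
    (hf : ∀ v ∈ S, IsDualVector S v (f v)) (huS : ∀ v ∈ S, dotp u v = 1) (hu : IsLP u)
    (hv : v ∈ S) (h : ∀ v' ∈ S, v' ≠ v → IsLP (f v')) : IsLP (f v) := by
  classical
  lift S to Finset (Fin d → ℝ) using (linearIndependent_of_isDualVector hf).setFinite
  have hfv : f v = u - ∑ v' ∈ S.erase v, f v' := by
    rw [← sum_eq_of_isDualVector hS hf huS, ← Finset.add_sum_erase S f hv, add_sub_cancel_right]
  rw [hfv]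
  exact hu.sub (.sum fun v' hv' => h v' (Finset.mem_of_mem_erase hv') (Finset.ne_of_mem_erase hv'))

lemma isZBasis_of_isLP_dualVector (hS : Submodule.span ℝ S = ⊤) (hSLP : ∀ v ∈ S, IsLP v)
    (hf : ∀ v ∈ S, IsDualVector S v (f v)) (hfLP : ∀ v ∈ S, IsLP (f v)) : IsZBasis S := by
  obtain ⟨b, hb, hrepr⟩ := exists_basis_of_isDualVector hS hf
  let σ : S ≃ Fin d := b.indexEquiv (Pi.basisFun ℝ (Fin d))
  refine ⟨fun i => σ.symm i, Subtype.val_injective.comp σ.symm.injective, ?_,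
    fun i => hSLP _ (σ.symm i).2, fun x hx => ?_⟩
  · exact (σ.symm.surjective.range_comp _).trans Subtype.range_coe
  · choose c hc using fun i => (hfLP _ (σ.symm i).2).exists_dotp_eq_intCast_s12 hx
    refine ⟨c, ((b.reindex σ).sum_repr x).symm.trans (Finset.sum_congr rfl fun i _ => ?_)⟩
    rw [b.repr_reindex_apply, b.reindex_apply, hb, hrepr, hc]

end DualVectors

section Facets

variable {d : ℕ} {P F F' : Set (Fin d → ℝ)} {u u' v v' w : Fin d → ℝ}

namespace IsFacetNormal

lemma subset (hF : IsFacetNormal P F u) : F ⊆ P := by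
  rw [hF.2.2.1]
  exact Set.sep_subset _ _

lemma dotp_eq_one (hF : IsFacetNormal P F u) {z : Fin d → ℝ} (hz : z ∈ F) : dotp u z = 1 := by
  rw [hF.2.2.1] at hz
  exact hz.2

lemma span_eq_top (hF : IsFacetNormal P F u) : Submodule.span ℝ F = ⊤ := by
  have hrank := finrank_span_eq_finrank_vectorSpan_add_one hF.1 (dotProductEquiv ℝ (Fin d) u)
    one_ne_zero fun z hz => hF.dotp_eq_one hz
  have hle := Submodule.finrank_le (Submodule.span ℝ F)
  rw [hF.2.2.2] at hrank
  apply Submodule.eq_top_of_finrank_eq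
  rw [Module.finrank_fin_fun] at hle ⊢
  omega

lemma of_span_eq_top (hne : {y ∈ P | dotp u y = 1}.Nonempty) (hu : ∀ y ∈ P, dotp u y ≤ 1)
    (hspan : Submodule.span ℝ {y ∈ P | dotp u y = 1} = ⊤) :
    IsFacetNormal P {y ∈ P | dotp u y = 1} u := by
  have hrank := finrank_span_eq_finrank_vectorSpan_add_one hne (dotProductEquiv ℝ (Fin d) u)
    one_ne_zero fun z hz => hz.2
  rw [hspan, finrank_top, Module.finrank_fin_fun] at hrank
  exact ⟨hne, hu, rfl, by omega⟩

lemma eq_of_subset (hF : IsFacetNormal P F u) (hF' : IsFacetNormal P F' u') (h : F' ⊆ F) :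
    F' = F := by
  have hu : u' = u := eq_of_forall_dotp_eq hF'.span_eq_top fun z hz => by
    rw [hF'.dotp_eq_one hz, hF.dotp_eq_one (h hz)]
  rw [hF'.2.2.1, hF.2.2.1, hu]

lemma isExposed (hF : IsFacetNormal P F u) : IsExposed ℝ P F := by
  rintro ⟨z₀, hz₀⟩
  refine ⟨(dotProductEquiv ℝ (Fin d) u).toContinuousLinearMap, Set.ext fun z => ⟨fun hz => ?_,
    fun hz => ?_⟩⟩
  · exact ⟨hF.subset hz, fun y hy => (hF.2.1 y hy).trans (hF.dotp_eq_one hz).ge⟩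
  · rw [hF.2.2.1]
    exact ⟨hz.1, le_antisymm (hF.2.1 z hz.1)
      ((hF.dotp_eq_one hz₀).ge.trans (hz.2 z₀ (hF.subset hz₀)))⟩

lemma convexHull_extremePoints (hP : IsLatticePolytope P) (hF : IsFacetNormal P F u) :
    convexHull ℝ (F.extremePoints ℝ) = F := by
  obtain ⟨V, -, rfl⟩ := hP
  exact convexHull_extremePoints_of_isExposed V.finite_toSet hF.isExposed

lemma span_extremePoints (hP : IsLatticePolytope P) (hF : IsFacetNormal P F u) :
    Submodule.span ℝ (F.extremePoints ℝ) = ⊤ := by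
  rw [← span_convexHull, hF.convexHull_extremePoints hP, hF.span_eq_top]

lemma isLP_of_mem_extremePoints (hP : IsLatticePolytope P) (hF : IsFacetNormal P F u)
    (hv : v ∈ F.extremePoints ℝ) : IsLP v := by
  obtain ⟨V, hV, rfl⟩ := hP
  exact hV v (extremePoints_convexHull_subset
    (hF.isExposed.isExtreme.extremePoints_subset_extremePoints hv))

lemma mem_extremePoints_dualPolytope (hF : IsFacetNormal P F u) :
    u ∈ (dualPolytope P).extremePoints ℝ := by
  refine ⟨hF.2.1, fun x hx y hy hu => ?_⟩
  obtain ⟨a, b, ha, hb, hab, rfl⟩ := hu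
  refine eq_of_forall_dotp_eq hF.span_eq_top fun z hz => ?_
  have hxz := hx z (hF.subset hz)
  have hyz := hy z (hF.subset hz)
  have hz1 := hF.dotp_eq_one hz
  have hcomb : a * dotp x z + b * dotp y z = 1 := by simpa [dotp_eq_dotProductEquiv] using hz1
  rw [hz1]
  nlinarith

lemma isLP (hP : IsLatticePolytope (dualPolytope P)) (hF : IsFacetNormal P F u) : IsLP u := by
  obtain ⟨W, hW, hPW⟩ := hP
  exact hW u (extremePoints_convexHull_subset (hPW ▸ hF.mem_extremePoints_dualPolytope))

lemma exists_nbrFacet (hP : IsLatticePolytope P) (h0 : 0 ∈ interior P) (hF : IsFacetNormal P F u)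
    (hw : IsDualVector (F.extremePoints ℝ) v w) : ∃ F', NbrFacet P F v F' := by
  have hw_nonneg : ∀ z ∈ F, 0 ≤ dotp w z := fun z hz =>
    le_dotp_of_mem_convexHull hw.dotp_nonneg ((hF.convexHull_extremePoints hP).ge hz)
  obtain ⟨V, -, hPV⟩ := id hP
  have hVP : ∀ z ∈ V, z ∈ P := fun z hz => hPV ▸ subset_convexHull ℝ _ hz
  have hneg : ∃ z ∈ V, dotp w z < 0 := by
    by_contra! hnonneg
    obtain ⟨z, hz, hwz⟩ := exists_mem_dotp_neg h0 hw.ne_zero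
    exact hwz.not_ge (le_dotp_of_mem_convexHull hnonneg (hPV ▸ hz))
  obtain ⟨t, htV, y, hyV, hwy, hty⟩ := exists_tilt (fun z hz => hF.2.1 z (hVP z hz)) hneg
  simp only [← dotp_sub_smul_left] at htV hty
  have htP : ∀ z ∈ P, dotp (u - t • w) z ≤ 1 := fun z hz =>
    dotp_le_of_mem_convexHull htV (hPV ▸ hz)
  let F' := {z ∈ P | dotp (u - t • w) z = 1}
  have hyF' : y ∈ F' := ⟨hVP y hyV, hty⟩
  have hridge : F.extremePoints ℝ \ {v} ⊆ F' := fun z ⟨hz, hzv⟩ =>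
    ⟨hF.subset hz.1, by rw [dotp_sub_smul_left, hF.dotp_eq_one hz.1, hw.2 z hz hzv]; ring⟩
  have hspan : Submodule.span ℝ F' = ⊤ :=
    span_eq_top_of_exchange (dotProductEquiv ℝ (Fin d) w) (hF.span_extremePoints hP) hw.2 hwy.ne
      hridge hyF'
  refine ⟨F', ⟨_, of_span_eq_top ⟨y, hyF'⟩ htP hspan⟩, fun h => ?_, hridge⟩
  exact hwy.not_ge (hw_nonneg y (h ▸ hyF'))

lemma exists_nbrVertex (hP : IsLatticePolytope P) (h0 : 0 ∈ interior P) (hF : IsFacetNormal P F u)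
    (hw : IsDualVector (F.extremePoints ℝ) v w) : ∃ v', NbrVertex P F v v' := by
  obtain ⟨F', hnbr⟩ := hF.exists_nbrFacet hP h0 hw
  obtain ⟨u', hF'⟩ := hnbr.1
  by_contra! hnone
  have hext : F'.extremePoints ℝ ⊆ F := fun v' hv' =>
    by_contra fun hv'F => hnone v' ⟨F', hnbr, hv', hv'F⟩
  have hconv : Convex ℝ F := hF.convexHull_extremePoints hP ▸ convex_convexHull ℝ _
  have hsub : F' ⊆ F := (hF'.convexHull_extremePoints hP).ge.trans (convexHull_min hext hconv)
  exact hnbr.2.1 (hF.eq_of_subset hF' hsub)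

lemma sub_eq_of_nbrFacet (hP : IsLatticePolytope P) (hF : IsFacetNormal P F u)
    (hF' : IsFacetNormal P F' u') (hridge : F.extremePoints ℝ \ {v} ⊆ F')
    (hw : IsDualVector (F.extremePoints ℝ) v w) (hv' : v' ∈ F') (huv' : dotp u v' = 0)
    (hwv' : dotp w v' = -1) : u - u' = w := by
  have hsub : ∀ z, dotp (u - u') z = dotp u z - dotp u' z := fun z => by
    simp [dotp_eq_dotProductEquiv]
  set t := dotp (u - u') v
  have hsmul : u - u' = t • w := hw.eq_smul (hF.span_extremePoints hP) fun z hz hzv => by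
    rw [hsub, hF.dotp_eq_one hz.1, hF'.dotp_eq_one (hridge ⟨hz, hzv⟩), sub_self]
  have hone : dotp (u - t • w) v' = 1 := by
    rw [← hsmul, sub_sub_cancel, hF'.dotp_eq_one hv']
  rw [dotp_sub_smul_left, huv', hwv'] at hone
  rw [hsmul, show t = 1 by linarith, one_smul]

lemma isLP_dualVector_of_nbrVertex (hP : IsReflexive P) (hF : IsFacetNormal P F u)
    (hw : IsDualVector (F.extremePoints ℝ) v w) (hv' : NbrVertex P F v v') (huv' : dotp u v' = 0)
    (hwv' : dotp w v' = -1) : IsLP w := by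
  obtain ⟨F', ⟨⟨u', hF'⟩, -, hridge⟩, hv'F', -⟩ := hv'
  rw [← hF.sub_eq_of_nbrFacet hP.1 hF' hridge hw hv'F'.1 huv' hwv']
  exact (hF.isLP hP.2.2).sub (hF'.isLP hP.2.2)

end IsFacetNormal

end Facets

lemma subsingleton_diff_range {α : Type*} {n : ℕ} {S : Set α} (hS : S.Finite)
    (hn : S.ncard ≤ n + 1) {e : Fin n → α} (he : Function.Injective e) (heS : ∀ i, e i ∈ S) :
    (S \ Set.range e).Subsingleton := by
  have : Finite ↥(S \ Set.range e) := hS.sdiff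
  rw [← Set.ncard_le_one_iff_subsingleton, Set.ncard_sdiff (Set.range_subset_iff.2 heS),
    Set.ncard_range_of_injective he, Nat.card_fin]
  omega

theorem stmt12_general {d : ℕ} (P : Set (Fin d → ℝ)) (hP : IsReflexive P)
    (F : Set (Fin d → ℝ)) (u : Fin d → ℝ) (hF : IsFacetNormal P F u)
    (uv : (Fin d → ℝ) → (Fin d → ℝ))
    (huv : ∀ w ∈ Set.extremePoints ℝ F, IsDualVector (Set.extremePoints ℝ F) w (uv w))
    (e : Fin (d - 1) → (Fin d → ℝ)) (he : Function.Injective e)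
    (heF : ∀ i, e i ∈ Set.extremePoints ℝ F)
    (hnbr : ∀ i, ∃ v', NbrVertex P F (e i) v' ∧ dotp u v' = 0 ∧ dotp (uv (e i)) v' = -1) :
    IsZBasis (Set.extremePoints ℝ F) := by
  have hspan := hF.span_extremePoints hP.1
  have hcard : (Set.extremePoints ℝ F).ncard = d := by
    obtain ⟨b, -⟩ := exists_basis_of_isDualVector hspan huv
    rw [← Nat.card_coe_set_eq, ← Module.finrank_eq_nat_card_basis b, Module.finrank_fin_fun]
  have he_isLP : ∀ i, IsLP (uv (e i)) := fun i =>
    have ⟨_, hv', huv', hwv'⟩ := hnbr i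
    hF.isLP_dualVector_of_nbrVertex hP (huv _ (heF i)) hv' huv' hwv'
  have hrest : (Set.extremePoints ℝ F \ Set.range e).Subsingleton :=
    subsingleton_diff_range (linearIndependent_of_isDualVector huv).setFinite (by omega) he heF
  refine isZBasis_of_isLP_dualVector hspan (fun v => hF.isLP_of_mem_extremePoints hP.1) huv
    fun v hv => ?_
  by_cases hve : v ∈ Set.range e
  · obtain ⟨i, rfl⟩ := hve
    exact he_isLP i
  · refine isLP_dualVector_of_forall_ne hspan huv (fun z hz => hF.dotp_eq_one hz.1)
      (hF.isLP hP.2.2) hv fun v' hv' hne => ?_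
    obtain ⟨i, rfl⟩ : v' ∈ Set.range e := by
      by_contra hv'e
      exact hne (hrest ⟨hv', hv'e⟩ ⟨hv, hve⟩)
    exact he_isLP i

/-- if at least `d-1` vertices `e_i` of a facet `F` have their neighboring
vertices `n(F,e_i)` in `H(F,0)` with `⟨u_F^{e_i}, n(F,e_i)⟩ = -1`, then `𝒱(F)` is a
`ℤ`-basis of `ℤ^d`. -/
theorem stmt12 {d : ℕ} (P : Set (Fin d → ℝ)) (hP : IsReflexive P) (hs : IsSimplicial P)
    (F : Set (Fin d → ℝ)) (u : Fin d → ℝ) (hF : IsFacetNormal P F u)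
    (uv : (Fin d → ℝ) → (Fin d → ℝ))
    (huv : ∀ w ∈ Set.extremePoints ℝ F, dotp (uv w) w = 1 ∧
      ∀ w' ∈ Set.extremePoints ℝ F, w' ≠ w → dotp (uv w) w' = 0)
    (e : Fin (d - 1) → (Fin d → ℝ)) (he : Function.Injective e)
    (heF : ∀ i, e i ∈ Set.extremePoints ℝ F)
    (hnbr : ∀ i, ∀ v', NbrVertex P F (e i) v' →
      dotp u v' = 0 ∧ dotp (uv (e i)) v' = -1) :
    IsZBasis (Set.extremePoints ℝ F) :=
  stmt12_general P hP F u hF uv huv e he heF fun i =>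
    (hF.exists_nbrVertex hP.1 hP.2.1 (huv _ (heF i))).imp fun v' hv' => ⟨hv', hnbr i v' hv'⟩
end
end
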